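/- arXiv:2501.06369 — 3 statements merged into one kernel-verified Lean document; each statement's English description precedes it below -/
import Mathlib

section
/- Case NN inf-sup (both subproblems have natural boundary conditions): in the abstract discrete Stokes–Darcy setting, assume full Stokes stability and full Darcy stability with a common constant γ₀ > 0. Then for every nonzero (q_S, q_D) ∈ Q_S × Q_D there exists a nonzero v ∈ W such that b(v, (q_S,q_D)) ≥ γ₀ (1 + γ₀²)^{-1/2} ‖v‖_V ‖(q_S,q_D)‖_Q. In particular the inf-sup constant of b on W × (Q_S × Q_D) with respect to the weighted norms is at least γ₀(1+γ₀²)^{-1/2}, independently of μ, K, ω_S, ω_D. -/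
/-!
A pressure `q = (q_S, q_D)` is tested with `v = (ω_S⁻¹ μ⁻¹ v_S, ω_D⁻¹ K v_D)`, where `v_S` and `v_D`
are the stable preimages of `q_S` and `q_D` supplied by the two stability hypotheses. The
weights are chosen so that `b(v, q) = ‖q‖_Q²` and so that the divergence part of `‖v‖_V²` is also
`‖q‖_Q²`. The stability bounds together with `ω_S, ω_D ≥ 1` bound the remaining part of `‖v‖_V²` by
`γ₀⁻² ‖q‖_Q²`. Hence `‖v‖_V ≤ γ₀⁻¹ (1 + γ₀²)^{1/2} ‖q‖_Q`, which is the claimed bound after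
multiplication by `‖q‖_Q`.
-/

noncomputable section

open RealInnerProductSpace

variable {VS VD QS QD : Type*}
  [NormedAddCommGroup VS] [InnerProductSpace ℝ VS]
  [NormedAddCommGroup VD] [InnerProductSpace ℝ VD]
  [NormedAddCommGroup QS] [InnerProductSpace ℝ QS]
  [NormedAddCommGroup QD] [InnerProductSpace ℝ QD]

/-- The weighted velocity norm
`‖(v_S, v_D)‖_V² = μ‖v_S‖² + K⁻¹‖v_D‖² + ω_S μ‖d_S v_S‖² + ω_D K⁻¹‖d_D v_D‖²`. -/
def normV (μ K ωS ωD : ℝ) (dS : VS →ₗ[ℝ] QS) (dD : VD →ₗ[ℝ] QD) (v : VS × VD) : ℝ :=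
  Real.sqrt (μ * ‖v.1‖ ^ 2 + K⁻¹ * ‖v.2‖ ^ 2 +
    ωS * μ * ‖dS v.1‖ ^ 2 + ωD * K⁻¹ * ‖dD v.2‖ ^ 2)

/-- The weighted pressure norm `‖(q_S, q_D)‖_Q² = ω_S⁻¹ μ⁻¹‖q_S‖² + ω_D⁻¹ K‖q_D‖²`. -/
def normQ (μ K ωS ωD : ℝ) (q : QS × QD) : ℝ :=
  Real.sqrt (ωS⁻¹ * μ⁻¹ * ‖q.1‖ ^ 2 + ωD⁻¹ * K * ‖q.2‖ ^ 2)

/-- The coupling form `b((v_S, v_D), (q_S, q_D)) = ⟨d_S v_S, q_S⟩ + ⟨d_D v_D, q_D⟩`. -/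
def bForm (dS : VS →ₗ[ℝ] QS) (dD : VD →ₗ[ℝ] QD) (v : VS × VD) (q : QS × QD) : ℝ :=
  ⟪dS v.1, q.1⟫ + ⟪dD v.2, q.2⟫

/-- The squared norm contribution of one subdomain. Here `a` is the physical weight (`μ` for Stokes,
`K⁻¹` for Darcy), `w` the penalty weight, `x` the norm of the unscaled velocity and `y` that of the
pressure; the scaling factor of the test velocity is `w⁻¹ a⁻¹`. -/
lemma weighted_component_le {a w γ x y : ℝ} (ha : 0 < a) (hw : 1 ≤ w) (hγ : 0 < γ)
    (hx : 0 ≤ x) (hxy : x ≤ γ⁻¹ * y) :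
    a * (w⁻¹ * a⁻¹ * x) ^ 2 + w * a * (w⁻¹ * a⁻¹ * y) ^ 2 ≤
      (1 + γ ^ 2) / γ ^ 2 * (w⁻¹ * a⁻¹ * y ^ 2) := by
  have hw0 : 0 < w := by linarith
  have hsq : x ^ 2 ≤ (γ⁻¹ * y) ^ 2 := pow_le_pow_left₀ hx hxy 2
  have hw1 : w⁻¹ ≤ 1 := inv_le_one_of_one_le₀ hw
  calc a * (w⁻¹ * a⁻¹ * x) ^ 2 + w * a * (w⁻¹ * a⁻¹ * y) ^ 2
      = w⁻¹ * (w⁻¹ * a⁻¹ * x ^ 2) + w⁻¹ * a⁻¹ * y ^ 2 := by field_simp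
    _ ≤ 1 * (w⁻¹ * a⁻¹ * (γ⁻¹ * y) ^ 2) + w⁻¹ * a⁻¹ * y ^ 2 := by gcongr
    _ = (1 + γ ^ 2) / γ ^ 2 * (w⁻¹ * a⁻¹ * y ^ 2) := by field_simp

/-- **Case NN inf-sup.** Under full Stokes stability and full Darcy stability with common
constant `γ₀ > 0`, for every nonzero pressure `q` there is a nonzero `v ∈ W` with
`b(v, q) ≥ γ₀ (1 + γ₀²)^{-1/2} ‖v‖_V ‖q‖_Q`, independently of `μ, K, ω_S, ω_D`. -/
theorem stokesDarcy_infSup_caseNN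
    (μ K ωS ωD : ℝ) (hμ : 0 < μ) (hK : 0 < K) (hωS : 1 ≤ ωS) (hωD : 1 ≤ ωD)
    (dS : VS →ₗ[ℝ] QS) (dD : VD →ₗ[ℝ] QD) (W : Submodule ℝ (VS × VD))
    (γ₀ : ℝ) (hγ₀ : 0 < γ₀)
    (hStokes : ∀ qS : QS, ∃ vS : VS,
      ((vS, 0) : VS × VD) ∈ W ∧ dS vS = qS ∧ ‖vS‖ ≤ γ₀⁻¹ * ‖qS‖)
    (hDarcy : ∀ qD : QD, ∃ vD : VD,
      ((0, vD) : VS × VD) ∈ W ∧ dD vD = qD ∧ ‖vD‖ ≤ γ₀⁻¹ * ‖qD‖) :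
    ∀ q : QS × QD, q ≠ 0 → ∃ v ∈ W, v ≠ 0 ∧
      bForm dS dD v q ≥ γ₀ / Real.sqrt (1 + γ₀ ^ 2) *
        (normV μ K ωS ωD dS dD v * normQ μ K ωS ωD q) := by
  rintro ⟨qS, qD⟩ hq
  obtain ⟨vS, hvSW, hdS, hvS⟩ := hStokes qS
  obtain ⟨vD, hvDW, hdD, hvD⟩ := hDarcy qD
  have hωS0 : 0 < ωS := by linarith
  have hωD0 : 0 < ωD := by linarith
  have hQ0 : 0 ≤ ωS⁻¹ * μ⁻¹ * ‖qS‖ ^ 2 + ωD⁻¹ * K * ‖qD‖ ^ 2 := by positivity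
  have hb : bForm dS dD ((ωS⁻¹ * μ⁻¹) • vS, (ωD⁻¹ * K) • vD) (qS, qD) =
      normQ μ K ωS ωD (qS, qD) ^ 2 := by
    simp only [bForm, normQ, map_smul, hdS, hdD, real_inner_smul_left,
      real_inner_self_eq_norm_sq, Real.sq_sqrt hQ0]
  have hQpos : 0 < normQ μ K ωS ωD (qS, qD) := by
    apply Real.sqrt_pos.2
    by_cases h : qS = 0
    · have hD : qD ≠ 0 := by
        rintro rfl
        exact hq (by simp [h])
      have := norm_pos_iff.2 hD
      positivity
    · have := norm_pos_iff.2 h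
      positivity
  have hV : normV μ K ωS ωD dS dD ((ωS⁻¹ * μ⁻¹) • vS, (ωD⁻¹ * K) • vD) ≤
      Real.sqrt (1 + γ₀ ^ 2) / γ₀ * normQ μ K ωS ωD (qS, qD) := by
    have h1 := weighted_component_le hμ hωS hγ₀ (norm_nonneg vS) hvS
    have h2 := weighted_component_le (inv_pos.2 hK) hωD hγ₀ (norm_nonneg vD) hvD
    rw [inv_inv] at h2
    apply Real.sqrt_le_iff.2 ⟨by positivity, ?_⟩
    rw [mul_pow, div_pow, Real.sq_sqrt (by positivity), normQ, Real.sq_sqrt hQ0]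
    simp only [map_smul, hdS, hdD, norm_smul, Real.norm_eq_abs, mul_pow, sq_abs] at h1 h2 ⊢
    linarith
  refine ⟨((ωS⁻¹ * μ⁻¹) • vS, (ωD⁻¹ * K) • vD), ?_, ?_, ?_⟩
  · have h := W.add_mem (W.smul_mem (ωS⁻¹ * μ⁻¹) hvSW) (W.smul_mem (ωD⁻¹ * K) hvDW)
    simpa using h
  · -- `b(0, q) = 0`, whereas `b(v, q) = ‖q‖_Q² > 0`.
    intro h
    rw [h] at hb
    simp only [bForm, Prod.fst_zero, Prod.snd_zero, map_zero, inner_zero_left, add_zero] at hb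
    exact (pow_pos hQpos 2).ne hb
  · rw [hb, ge_iff_le]
    have hs : 0 < Real.sqrt (1 + γ₀ ^ 2) := by positivity
    calc _ ≤ γ₀ / Real.sqrt (1 + γ₀ ^ 2) *
          (Real.sqrt (1 + γ₀ ^ 2) / γ₀ * normQ μ K ωS ωD (qS, qD) *
            normQ μ K ωS ωD (qS, qD)) := by gcongr
      _ = normQ μ K ωS ωD (qS, qD) ^ 2 := by field_simp
end
end

section
/- Parameter-robust inf-sup on the quotient space, Case NE: in the abstract discrete Stokes–Darcy setting with distinguished vectors e_S, e_D, assume full Stokes stability with constant γ₀ > 0 and mean-zero Darcy stability with constant γ₀ > 0. Then for every nonzero q = (q_S, q_D) ∈ Q_S × Q_D with ⟨q_D, e_D⟩_{Q_D} = 0 there exists a nonzero v ∈ W with b(v, q) ≥ γ₀ (1 + γ₀²)^{-1/2} ‖v‖_V ‖q‖_Q; in particular, restricted to pressures whose Darcy component is orthogonal to e_D, the inf-sup constant is independent of μ, K, ω_S, ω_D. -/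
/-!
On the Stokes and the Darcy side separately, the stability hypothesis provides a velocity whose
divergence is the Riesz representative of `q` for the weighted pressure inner product, namely
`d_S v_S = (ω_S μ)⁻¹ q_S` and `d_D v_D = (ω_D K⁻¹)⁻¹ q_D`. Then `b(v, q) = ‖q‖_Q²`. The weighted
divergence terms of `‖v‖_V²` add up to exactly `‖q‖_Q²`, and the energy terms to at most
`γ₀⁻² ‖q‖_Q²` because `ω_S, ω_D ≥ 1`; hence `‖v‖_V² ≤ (1 + γ₀⁻²) ‖q‖_Q²`, which is the claim. The
two components decouple since `(v_S, 0)` and `(0, v_D)` both lie in `W`.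
-/

noncomputable section

open RealInnerProductSpace

variable {VS VD QS QD : Type*}
  [NormedAddCommGroup VS] [InnerProductSpace ℝ VS]
  [NormedAddCommGroup VD] [InnerProductSpace ℝ VD]
  [NormedAddCommGroup QS] [InnerProductSpace ℝ QS]
  [NormedAddCommGroup QD] [InnerProductSpace ℝ QD]

/-- The estimate on one subdomain: `a` is the energy norm of the velocity, `t` the norm of the
pressure, `ω⁻¹ ρ⁻¹ t` the norm of the divergence, and `ρ` is `μ` (Stokes) or `K⁻¹` (Darcy). -/
lemma weighted_energy_le {ρ ω γ a t : ℝ} (hρ : 0 < ρ) (hω : 1 ≤ ω) (ha : 0 ≤ a)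
    (h : a ≤ γ⁻¹ * (ω⁻¹ * ρ⁻¹ * t)) :
    ρ * a ^ 2 + ω * ρ * (ω⁻¹ * ρ⁻¹ * t) ^ 2 ≤ (1 + (γ⁻¹) ^ 2) * (ω⁻¹ * ρ⁻¹ * t ^ 2) := by
  have hω0 : 0 < ω := by linarith
  have h2 : a ^ 2 ≤ (γ⁻¹ * (ω⁻¹ * ρ⁻¹ * t)) ^ 2 := pow_le_pow_left₀ ha h 2
  have hdiv : ω * ρ * (ω⁻¹ * ρ⁻¹ * t) ^ 2 = ω⁻¹ * ρ⁻¹ * t ^ 2 := by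
    field_simp
  have hscale : ρ * (γ⁻¹ * (ω⁻¹ * ρ⁻¹ * t)) ^ 2
      = ω⁻¹ * ((γ⁻¹) ^ 2 * (ω⁻¹ * ρ⁻¹ * t ^ 2)) := by
    field_simp
  have hen : ρ * a ^ 2 ≤ (γ⁻¹) ^ 2 * (ω⁻¹ * ρ⁻¹ * t ^ 2) :=
    calc ρ * a ^ 2 ≤ ρ * (γ⁻¹ * (ω⁻¹ * ρ⁻¹ * t)) ^ 2 := by gcongr
      _ = ω⁻¹ * ((γ⁻¹) ^ 2 * (ω⁻¹ * ρ⁻¹ * t ^ 2)) := hscale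
      _ ≤ (γ⁻¹) ^ 2 * (ω⁻¹ * ρ⁻¹ * t ^ 2) :=
        mul_le_of_le_one_left (by positivity) (inv_le_one_of_one_le₀ hω)
  linarith

/-- **Parameter-robust inf-sup on the quotient space, Case NE.** Under full Stokes
stability and mean-zero Darcy stability with constant `γ₀ > 0`, for every nonzero
pressure `q = (q_S, q_D)` whose Darcy component is orthogonal to `e_D` there is a
nonzero `v ∈ W` with `b(v, q) ≥ γ₀ (1 + γ₀²)^{-1/2} ‖v‖_V ‖q‖_Q`; in particular the
inf-sup constant on this quotient is independent of `μ, K, ω_S, ω_D`. -/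
theorem stokesDarcy_quotient_infSup_caseNE
    (μ K ωS ωD : ℝ) (hμ : 0 < μ) (hK : 0 < K) (hωS : 1 ≤ ωS) (hωD : 1 ≤ ωD)
    (dS : VS →ₗ[ℝ] QS) (dD : VD →ₗ[ℝ] QD) (W : Submodule ℝ (VS × VD))
    (eS : QS) (eD : QD) (heS : eS ≠ 0) (heD : eD ≠ 0)
    (γ₀ : ℝ) (hγ₀ : 0 < γ₀)
    (hStokes : ∀ qS : QS, ∃ vS : VS,
      ((vS, 0) : VS × VD) ∈ W ∧ dS vS = qS ∧ ‖vS‖ ≤ γ₀⁻¹ * ‖qS‖)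
    (hDarcy : ∀ qD : QD, ⟪qD, eD⟫ = 0 → ∃ vD : VD,
      ((0, vD) : VS × VD) ∈ W ∧ dD vD = qD ∧ ‖vD‖ ≤ γ₀⁻¹ * ‖qD‖) :
    ∀ q : QS × QD, q ≠ 0 → ⟪q.2, eD⟫ = 0 → ∃ v ∈ W, v ≠ 0 ∧
      bForm dS dD v q ≥ γ₀ / Real.sqrt (1 + γ₀ ^ 2) *
        (normV μ K ωS ωD dS dD v * normQ μ K ωS ωD q) := by
  rintro ⟨qS, qD⟩ hq hqe
  have hωS0 : 0 < ωS := by linarith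
  have hωD0 : 0 < ωD := by linarith
  have hcS : 0 < ωS⁻¹ * μ⁻¹ := by positivity
  have hcD : 0 < ωD⁻¹ * K := by positivity
  obtain ⟨vS, hvSW, hdS, hvS⟩ := hStokes ((ωS⁻¹ * μ⁻¹) • qS)
  obtain ⟨vD, hvDW, hdD, hvD⟩ := hDarcy ((ωD⁻¹ * K) • qD) (by
    rw [real_inner_smul_left]
    exact mul_eq_zero_of_right _ hqe)
  rw [norm_smul, Real.norm_of_nonneg hcS.le] at hvS
  rw [norm_smul, Real.norm_of_nonneg hcD.le] at hvD
  refine ⟨(vS, vD), by simpa using W.add_mem hvSW hvDW, ?_, ?_⟩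
  · intro h0
    obtain ⟨rfl, rfl⟩ := Prod.mk_eq_zero.mp h0
    apply hq
    rw [map_zero, eq_comm, smul_eq_zero_iff_right hcS.ne'] at hdS
    rw [map_zero, eq_comm, smul_eq_zero_iff_right hcD.ne'] at hdD
    rw [hdS, hdD, Prod.mk_zero_zero]
  · have hQ : 0 ≤ ωS⁻¹ * μ⁻¹ * ‖qS‖ ^ 2 + ωD⁻¹ * K * ‖qD‖ ^ 2 := by positivity
    have hb : bForm dS dD (vS, vD) (qS, qD) = normQ μ K ωS ωD (qS, qD) ^ 2 := by
      rw [normQ, Real.sq_sqrt hQ]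
      simp only [bForm, hdS, hdD, real_inner_smul_left, real_inner_self_eq_norm_sq]
    have hV : normV μ K ωS ωD dS dD (vS, vD)
        ≤ Real.sqrt (1 + (γ₀⁻¹) ^ 2) * normQ μ K ωS ωD (qS, qD) := by
      rw [normV, normQ, ← Real.sqrt_mul (by positivity)]
      apply Real.sqrt_le_sqrt
      simp only [hdS, hdD, norm_smul, Real.norm_of_nonneg hcS.le, Real.norm_of_nonneg hcD.le]
      have h1 := weighted_energy_le hμ hωS (norm_nonneg vS) hvS
      have h2 := weighted_energy_le (ρ := K⁻¹) (t := ‖qD‖) (γ := γ₀) (inv_pos.mpr hK) hωD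
        (norm_nonneg vD) (by rwa [inv_inv])
      rw [inv_inv] at h2
      linarith
    have hconst : γ₀ / Real.sqrt (1 + γ₀ ^ 2) * Real.sqrt (1 + (γ₀⁻¹) ^ 2) = 1 := by
      have : 1 + (γ₀⁻¹) ^ 2 = (1 + γ₀ ^ 2) / γ₀ ^ 2 := by
        field_simp
        ring
      rw [this, Real.sqrt_div (by positivity), Real.sqrt_sq hγ₀.le]
      field_simp
    have hQ0 : 0 ≤ normQ μ K ωS ωD (qS, qD) := Real.sqrt_nonneg _
    rw [ge_iff_le, hb]
    calc γ₀ / Real.sqrt (1 + γ₀ ^ 2) *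
          (normV μ K ωS ωD dS dD (vS, vD) * normQ μ K ωS ωD (qS, qD))
        ≤ γ₀ / Real.sqrt (1 + γ₀ ^ 2) * (Real.sqrt (1 + (γ₀⁻¹) ^ 2) *
          normQ μ K ωS ωD (qS, qD) * normQ μ K ωS ωD (qS, qD)) := by gcongr
      _ = (γ₀ / Real.sqrt (1 + γ₀ ^ 2) * Real.sqrt (1 + (γ₀⁻¹) ^ 2)) *
          normQ μ K ωS ωD (qS, qD) ^ 2 := by ring
      _ = normQ μ K ωS ωD (qS, qD) ^ 2 := by rw [hconst, one_mul]
end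
end

section
/- Parameter-robust inf-sup on the quotient space, Case EN: in the abstract discrete Stokes–Darcy setting with distinguished vectors e_S, e_D, assume mean-zero Stokes stability with constant γ₀ > 0 and full Darcy stability with constant γ₀ > 0. Then for every nonzero q = (q_S, q_D) ∈ Q_S × Q_D with ⟨q_S, e_S⟩_{Q_S} = 0 there exists a nonzero v ∈ W with b(v, q) ≥ γ₀ (1 + γ₀²)^{-1/2} ‖v‖_V ‖q‖_Q; in particular, restricted to pressures whose Stokes component is orthogonal to e_S, the inf-sup constant is independent of μ, K, ω_S, ω_D. -/
/-!
The test velocity is built by lifting the Riesz representative of `q` in the weighted pressure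
norm: with `a = ωS⁻¹ μ⁻¹` and `c = ωD⁻¹ K`, stability gives `v ∈ W` with `dS v.1 = a • q.1` and
`dD v.2 = c • q.2`, so `b(v, q) = ‖q‖_Q²`. The weights satisfy `ωS μ a = 1` and `μ a = ωS⁻¹ ≤ 1`,
and likewise on the Darcy side, whence `‖v‖_V² ≤ (1 + γ₀⁻²) ‖q‖_Q²`
(`weighted_lift_le` on each subdomain). The bound follows by dividing.
-/

/-- One-subdomain bound on a lift with velocity norm `x` and divergence norm `a * y`, for
viscosity weight `m` and grad-div weight `w ≥ 1`, where `a = w⁻¹ * m⁻¹` is the pressure weight. -/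
lemma weighted_lift_le {m w γ x y a : ℝ} (hm : 0 < m) (hw : 1 ≤ w) (hx : 0 ≤ x)
    (ha : a = w⁻¹ * m⁻¹) (h : x ≤ γ⁻¹ * (a * y)) :
    m * x ^ 2 + w * m * (a * y) ^ 2 ≤ (1 + γ⁻¹ ^ 2) * (a * y ^ 2) := by
  have hw0 : 0 < w := by linarith
  have ha0 : 0 < a := by rw [ha]; positivity
  have hwma : w * m * a = 1 := by rw [ha]; field_simp
  have hma : m * a ≤ 1 := by nlinarith [mul_pos hm ha0]
  have hx2 : x ^ 2 ≤ (γ⁻¹ * (a * y)) ^ 2 := pow_le_pow_left₀ hx h 2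
  calc m * x ^ 2 + w * m * (a * y) ^ 2
      ≤ m * (γ⁻¹ * (a * y)) ^ 2 + w * m * (a * y) ^ 2 := by gcongr
    _ = (m * a) * (γ⁻¹ ^ 2 * (a * y ^ 2)) + (w * m * a) * (a * y ^ 2) := by ring
    _ ≤ 1 * (γ⁻¹ ^ 2 * (a * y ^ 2)) + (w * m * a) * (a * y ^ 2) := by gcongr
    _ = (1 + γ⁻¹ ^ 2) * (a * y ^ 2) := by rw [hwma]; ring


noncomputable section

open RealInnerProductSpace

variable {VS VD QS QD : Type*}
  [NormedAddCommGroup VS] [InnerProductSpace ℝ VS]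
  [NormedAddCommGroup VD] [InnerProductSpace ℝ VD]
  [NormedAddCommGroup QS] [InnerProductSpace ℝ QS]
  [NormedAddCommGroup QD] [InnerProductSpace ℝ QD]

/-- **Parameter-robust inf-sup on the quotient space, Case EN.** Under mean-zero Stokes
stability and full Darcy stability with constant `γ₀ > 0`, for every nonzero pressure
`q = (q_S, q_D)` whose Stokes component is orthogonal to `e_S` there is a nonzero
`v ∈ W` with `b(v, q) ≥ γ₀ (1 + γ₀²)^{-1/2} ‖v‖_V ‖q‖_Q`; in particular the inf-sup
constant on this quotient is independent of `μ, K, ω_S, ω_D`. -/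
theorem stokesDarcy_quotient_infSup_caseEN
    (μ K ωS ωD : ℝ) (hμ : 0 < μ) (hK : 0 < K) (hωS : 1 ≤ ωS) (hωD : 1 ≤ ωD)
    (dS : VS →ₗ[ℝ] QS) (dD : VD →ₗ[ℝ] QD) (W : Submodule ℝ (VS × VD))
    (eS : QS) (eD : QD) (heS : eS ≠ 0) (heD : eD ≠ 0)
    (γ₀ : ℝ) (hγ₀ : 0 < γ₀)
    (hStokes : ∀ qS : QS, ⟪qS, eS⟫ = 0 → ∃ vS : VS,
      ((vS, 0) : VS × VD) ∈ W ∧ dS vS = qS ∧ ‖vS‖ ≤ γ₀⁻¹ * ‖qS‖)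
    (hDarcy : ∀ qD : QD, ∃ vD : VD,
      ((0, vD) : VS × VD) ∈ W ∧ dD vD = qD ∧ ‖vD‖ ≤ γ₀⁻¹ * ‖qD‖) :
    ∀ q : QS × QD, q ≠ 0 → ⟪q.1, eS⟫ = 0 → ∃ v ∈ W, v ≠ 0 ∧
      bForm dS dD v q ≥ γ₀ / Real.sqrt (1 + γ₀ ^ 2) *
        (normV μ K ωS ωD dS dD v * normQ μ K ωS ωD q) := by
  rintro ⟨qS, qD⟩ hq horth
  have hωS0 : 0 < ωS := by linarith
  have hωD0 : 0 < ωD := by linarith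
  obtain ⟨a, ha⟩ : ∃ a, a = ωS⁻¹ * μ⁻¹ := ⟨_, rfl⟩
  obtain ⟨c, hc⟩ : ∃ c, c = ωD⁻¹ * K := ⟨_, rfl⟩
  have ha0 : 0 < a := by rw [ha]; positivity
  have hc0 : 0 < c := by rw [hc]; positivity
  obtain ⟨vS, hSW, hdS, hnS⟩ := hStokes (a • qS) (by
    rw [real_inner_smul_left]; exact mul_eq_zero_of_right _ horth)
  obtain ⟨vD, hDW, hdD, hnD⟩ := hDarcy (c • qD)
  rw [norm_smul_of_nonneg ha0.le] at hnS
  rw [norm_smul_of_nonneg hc0.le] at hnD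
  refine ⟨(vS, vD), by simpa using W.add_mem hSW hDW, ?_, ?_⟩
  · intro hv
    obtain ⟨rfl, rfl⟩ := Prod.mk_eq_zero.1 hv
    rw [map_zero] at hdS hdD
    exact hq (Prod.mk_eq_zero.2 ⟨(smul_eq_zero.1 hdS.symm).resolve_left ha0.ne',
      (smul_eq_zero.1 hdD.symm).resolve_left hc0.ne'⟩)
  · have hS := weighted_lift_le hμ hωS (norm_nonneg vS) ha hnS
    have hD := weighted_lift_le (inv_pos.2 hK) hωD (norm_nonneg vD) (by rw [hc, inv_inv]) hnD
    have hb : bForm dS dD (vS, vD) (qS, qD) = a * ‖qS‖ ^ 2 + c * ‖qD‖ ^ 2 := by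
      simp only [bForm, hdS, hdD, real_inner_smul_left, real_inner_self_eq_norm_sq]
    have hQ : normQ μ K ωS ωD (qS, qD) = √(a * ‖qS‖ ^ 2 + c * ‖qD‖ ^ 2) := by
      simp only [normQ, ha, hc]
    have hV : normV μ K ωS ωD dS dD (vS, vD) ≤
        √((1 + γ₀⁻¹ ^ 2) * (a * ‖qS‖ ^ 2 + c * ‖qD‖ ^ 2)) := by
      apply Real.sqrt_le_sqrt
      simp only [hdS, hdD, norm_smul_of_nonneg ha0.le, norm_smul_of_nonneg hc0.le]
      linarith
    have hT : 0 ≤ a * ‖qS‖ ^ 2 + c * ‖qD‖ ^ 2 := by positivity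
    rw [hb, hQ]
    generalize a * ‖qS‖ ^ 2 + c * ‖qD‖ ^ 2 = T at hV hT
    have hγ : √(1 + γ₀⁻¹ ^ 2) = √(1 + γ₀ ^ 2) / γ₀ := by
      rw [show 1 + γ₀⁻¹ ^ 2 = (1 + γ₀ ^ 2) / γ₀ ^ 2 by field_simp; ring,
        Real.sqrt_div (by positivity), Real.sqrt_sq hγ₀.le]
    rw [Real.sqrt_mul (by positivity), hγ] at hV
    have hr : 0 < √(1 + γ₀ ^ 2) := by positivity
    calc γ₀ / √(1 + γ₀ ^ 2) * (normV μ K ωS ωD dS dD (vS, vD) * √T)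
        ≤ γ₀ / √(1 + γ₀ ^ 2) * (√(1 + γ₀ ^ 2) / γ₀ * √T * √T) := by gcongr
      _ = √T * √T := by field_simp
      _ = T := Real.mul_self_sqrt hT
end
end
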